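/- arXiv:2204.01654 — 3 statements merged into one kernel-verified Lean document; each statement's English description precedes it below -/
import Mathlib

section
/- Let n, m be positive integers, let A be a real n×n matrix and B a real n×m matrix, and let Q (n×n) and R (m×m) be symmetric positive definite matrices. If the pair (A,B) is asymptotically stabilizable, i.e., there exists a real m×n matrix F such that every (complex) eigenvalue of A + B·F has modulus strictly less than 1, then there exists a symmetric positive definite n×n matrix P satisfying the discrete algebraic Riccati equation P = Aᵀ P A + Q − Aᵀ P B (R + Bᵀ P B)⁻¹ Bᵀ P A. -/
open Matrix

/-!
For a feedback `K`, let `V_K P = (A + B K)ᴴ P (A + B K) + (Kᴴ R K + Q)`. Completing the square in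
`K` shows that the right-hand side of the Riccati equation is the minimum `min_K V_K P` in the
Loewner order. As a minimum of monotone maps it is monotone in `P ≥ 0`. A stabilizing feedback `F`
makes `V_F` a contraction in the long run, so `V_F` has a fixed point `S ≥ 0`, which is a
supersolution of the Riccati equation. Hence the Riccati iteration started at `0` increases, stays
below `S`, and converges to a solution.
-/

namespace RiccatiEquation

open Filter Topology Set
open scoped ComplexOrder MatrixOrder

section LoewnerOrder

variable {𝕜 n : Type*} [RCLike 𝕜]

theorem isClosed_setOf_posSemidef : IsClosed {M : Matrix n n 𝕜 | M.PosSemidef} := by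
  have hherm : IsClosed {M : Matrix n n 𝕜 | M.IsHermitian} :=
    isClosed_eq continuous_id.matrix_conjTranspose continuous_id
  have hform (x : n →₀ 𝕜) : IsClosed {M : Matrix n n 𝕜 |
      0 ≤ x.sum fun i xi => x.sum fun j xj => star xi * M i j * xj} :=
    isClosed_le continuous_const (by unfold Finsupp.sum; fun_prop)
  simpa only [PosSemidef, ofPred_and, ofPred_forall] using hherm.inter (isClosed_iInter hform)

instance matrixOrderClosedTopology : OrderClosedTopology (Matrix n n 𝕜) where
  isClosed_le' := isClosed_le_of_isClosed_nonneg <| by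
    simpa only [nonneg_iff_posSemidef] using isClosed_setOf_posSemidef

theorem re_diag_mono (i : n) : Monotone fun M : Matrix n n 𝕜 => RCLike.re (M i i) := by
  intro M N hMN
  simpa using (RCLike.nonneg_iff.mp ((le_iff.mp hMN).diag_nonneg (i := i))).1

theorem norm_apply_sq_le_re_diag_mul_re_diag {M : Matrix n n 𝕜} (hM : M.PosSemidef) (i j : n) :
    ‖M i j‖ ^ 2 ≤ RCLike.re (M i i) * RCLike.re (M j j) := by
  have hminor : 0 ≤ M i i * M j j - M i j * M j i := by
    have hdet := (hM.submatrix ![i, j]).det_nonneg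
    rwa [det_fin_two] at hdet
  have hii : (RCLike.re (M i i) : 𝕜) = M i i :=
    RCLike.conj_eq_iff_re.mp (hM.isHermitian.apply i i)
  rw [← hM.isHermitian.apply j i, RCLike.star_def, RCLike.mul_conj, ← hii,
    ← RCLike.ofReal_pow] at hminor
  have hre := (RCLike.nonneg_iff.mp hminor).1
  rwa [map_sub, RCLike.re_ofReal_mul, RCLike.ofReal_re, sub_nonneg] at hre

theorem norm_apply_le_re_diag_add_re_diag {M : Matrix n n 𝕜} (hM : M.PosSemidef) (i j : n) :
    ‖M i j‖ ≤ RCLike.re (M i i) + RCLike.re (M j j) := by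
  have hdiag (k : n) : 0 ≤ RCLike.re (M k k) := (RCLike.nonneg_iff.mp hM.diag_nonneg).1
  refine le_of_sq_le_sq ?_ (add_nonneg (hdiag i) (hdiag j))
  nlinarith [norm_apply_sq_le_re_diag_mul_re_diag hM i j, hdiag i, hdiag j]

theorem cauchySeq_apply_of_monotone_of_le {u : ℕ → Matrix n n 𝕜} {S : Matrix n n 𝕜}
    (hu : Monotone u) (hS : ∀ k, u k ≤ S) (i j : n) : CauchySeq fun k => u k i j := by
  let d (M : Matrix n n 𝕜) : ℝ := RCLike.re (M i i) + RCLike.re (M j j)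
  have hd : Monotone d := (re_diag_mono i).add (re_diag_mono j)
  have hbdd : BddAbove (range (d ∘ u)) := ⟨d S, forall_mem_range.mpr fun k => hd (hS k)⟩
  have hdist {k l : ℕ} (hkl : k ≤ l) : dist (u k i j) (u l i j) ≤ d (u l) - d (u k) := by
    have hentry := norm_apply_le_re_diag_add_re_diag (le_iff.mp (hu hkl)) i j
    simp only [Matrix.sub_apply, map_sub] at hentry
    rw [dist_comm, dist_eq_norm]
    linarith
  refine cauchySeq_of_le_tendsto_0' (fun k => (⨆ l, d (u l)) - d (u k))
    (fun k l hkl => (hdist hkl).trans (sub_le_sub_right (le_ciSup hbdd l) _)) ?_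
  simpa using (tendsto_atTop_ciSup (hd.comp hu) hbdd).const_sub (⨆ l, d (u l))

theorem exists_tendsto_of_monotone_of_le {u : ℕ → Matrix n n 𝕜} {S : Matrix n n 𝕜}
    (hu : Monotone u) (hS : ∀ k, u k ≤ S) : ∃ P, Tendsto u atTop (𝓝 P) := by
  choose P hP using fun i j =>
    cauchySeq_tendsto_of_complete (cauchySeq_apply_of_monotone_of_le hu hS i j)
  exact ⟨of P, tendsto_pi_nhds.mpr fun i => tendsto_pi_nhds.mpr (hP i)⟩

theorem exists_isFixedPt_mem_Icc_of_monotoneOn {f : Matrix n n 𝕜 → Matrix n n 𝕜}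
    {S : Matrix n n 𝕜} (hmono : MonotoneOn f (Icc 0 S)) (hcont : ContinuousOn f (Icc 0 S))
    (hS : 0 ≤ S) (hf0 : 0 ≤ f 0) (hfS : f S ≤ S) :
    ∃ P ∈ Icc 0 S, Function.IsFixedPt f P := by
  have h0 : (0 : Matrix n n 𝕜) ∈ Icc 0 S := left_mem_Icc.mpr hS
  have hmaps : MapsTo f (Icc 0 S) (Icc 0 S) := fun P hP =>
    ⟨hf0.trans (hmono h0 hP hP.1), (hmono hP (right_mem_Icc.mpr hS) hP.2).trans hfS⟩
  let u (k : ℕ) : Matrix n n 𝕜 := f^[k] 0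
  have husucc (k : ℕ) : u (k + 1) = f (u k) := Function.iterate_succ_apply' f k 0
  have humem (k : ℕ) : u k ∈ Icc 0 S := hmaps.iterate k h0
  have humono : Monotone u := monotone_nat_of_le_succ fun k => by
    induction k with
    | zero => exact hf0
    | succ k ih =>
      rw [husucc k, husucc (k + 1)]
      exact hmono (humem k) (humem (k + 1)) ih
  obtain ⟨P, hP⟩ := exists_tendsto_of_monotone_of_le humono fun k => (humem k).2
  have hPmem : P ∈ Icc 0 S := isClosed_Icc.mem_of_tendsto hP (Eventually.of_forall humem)
  have hfP : Tendsto (fun k => f (u k)) atTop (𝓝 (f P)) := (hcont P hPmem).tendsto.comp <|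
    tendsto_nhdsWithin_iff.mpr ⟨hP, Eventually.of_forall humem⟩
  refine ⟨P, hPmem, tendsto_nhds_unique hfP ?_⟩
  exact ((tendsto_add_atTop_iff_nat 1).mpr hP).congr husucc

end LoewnerOrder

section CompletingTheSquare

variable {α n m : Type*} [CommRing α] [StarRing α] [Fintype m]

theorem conjTranspose_sub_mul_mul_sub_of_mul_eq_neg {G : Matrix m m α} {N L K : Matrix m n α}
    (hG : G.IsHermitian) (hL : G * L = -N) :
    (K - L)ᴴ * G * (K - L) = Kᴴ * G * K + Kᴴ * N + Nᴴ * K - Nᴴ * L := by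
  have hL' : Lᴴ * G = -Nᴴ := by
    rw [← conjTranspose_neg, ← hL, conjTranspose_mul, hG.eq]
  calc (K - L)ᴴ * G * (K - L)
      = Kᴴ * G * K - Kᴴ * (G * L) - Lᴴ * G * K + Lᴴ * G * L := by
        simp only [conjTranspose_sub, Matrix.sub_mul, Matrix.mul_sub, Matrix.mul_assoc]
        abel
    _ = Kᴴ * G * K + Kᴴ * N + Nᴴ * K - Nᴴ * L := by
        rw [hL, hL']
        simp only [Matrix.mul_neg, Matrix.neg_mul]
        abel

variable [Fintype n] [DecidableEq m]

/-- The right-hand side of the discrete algebraic Riccati equation as a function of the unknown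
`P`, with the conjugate transpose in place of the transpose. The inverse has its intended meaning
only where `R + Bᴴ * P * B` is invertible. -/
noncomputable def riccatiMap (A : Matrix n n α) (B : Matrix n m α) (Q : Matrix n n α)
    (R : Matrix m m α) (P : Matrix n n α) : Matrix n n α :=
  Aᴴ * P * A + Q - Aᴴ * P * B * (R + Bᴴ * P * B)⁻¹ * Bᴴ * P * A

/-- The one-step cost of the feedback `u = K x` in the linear-quadratic problem with stage cost
`xᴴ Q x + uᴴ R u`, terminal cost `xᴴ P x` and dynamics `x ↦ A x + B u`, as a quadratic form in the
initial state. -/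
def feedbackCost (A : Matrix n n α) (B : Matrix n m α) (Q : Matrix n n α)
    (R : Matrix m m α) (K : Matrix m n α) (P : Matrix n n α) : Matrix n n α :=
  (A + B * K)ᴴ * P * (A + B * K) + (Kᴴ * R * K + Q)

/-- The feedback which minimizes `feedbackCost A B Q R K P` over `K`. -/
noncomputable def optimalGain (A : Matrix n n α) (B : Matrix n m α) (R : Matrix m m α)
    (P : Matrix n n α) : Matrix m n α :=
  -((R + Bᴴ * P * B)⁻¹ * (Bᴴ * P * A))

variable {A : Matrix n n α} {B : Matrix n m α} {Q : Matrix n n α} {R : Matrix m m α}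
  {P : Matrix n n α}

theorem feedbackCost_eq_riccatiMap_add (hR : R.IsHermitian) (hP : P.IsHermitian)
    (hG : IsUnit (R + Bᴴ * P * B)) (K : Matrix m n α) :
    feedbackCost A B Q R K P = riccatiMap A B Q R P +
      (K - optimalGain A B R P)ᴴ * (R + Bᴴ * P * B) * (K - optimalGain A B R P) := by
  have hGherm : (R + Bᴴ * P * B).IsHermitian :=
    hR.add (isHermitian_conjTranspose_mul_mul B hP)
  have hgain : (R + Bᴴ * P * B) * optimalGain A B R P = -(Bᴴ * P * A) := by
    rw [optimalGain, Matrix.mul_neg,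
      mul_nonsing_inv_cancel_left _ _ ((isUnit_iff_isUnit_det _).mp hG)]
  rw [conjTranspose_sub_mul_mul_sub_of_mul_eq_neg hGherm hgain]
  simp only [feedbackCost, riccatiMap, optimalGain, conjTranspose_add, conjTranspose_mul,
    conjTranspose_conjTranspose, hP.eq, Matrix.add_mul, Matrix.mul_add, Matrix.mul_neg,
    Matrix.mul_assoc]
  abel

theorem feedbackCost_optimalGain (hR : R.IsHermitian) (hP : P.IsHermitian)
    (hG : IsUnit (R + Bᴴ * P * B)) :
    feedbackCost A B Q R (optimalGain A B R P) P = riccatiMap A B Q R P := by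
  simp [feedbackCost_eq_riccatiMap_add hR hP hG]

end CompletingTheSquare

section RiccatiMap

variable {𝕜 n m : Type*} [RCLike 𝕜] [Fintype n]
  {A : Matrix n n 𝕜} {B : Matrix n m 𝕜} {Q : Matrix n n 𝕜} {R : Matrix m m 𝕜}

theorem posDef_add_conjTranspose_mul_mul [Finite m] (hR : R.PosDef) {P : Matrix n n 𝕜}
    (hP : P.PosSemidef) : (R + Bᴴ * P * B).PosDef :=
  hR.add_posSemidef (hP.conjTranspose_mul_mul_same B)

variable [Fintype m]

theorem feedbackCost_mono (K : Matrix m n 𝕜) : Monotone (feedbackCost A B Q R K) := by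
  intro P P' hPP'
  have hconj := (le_iff.mp hPP').conjTranspose_mul_mul_same (A + B * K)
  rw [Matrix.mul_sub, Matrix.sub_mul] at hconj
  exact add_le_add_left (le_iff.mpr hconj) _

theorem le_feedbackCost (hR : R.PosSemidef) {P : Matrix n n 𝕜} (hP : P.PosSemidef)
    (K : Matrix m n 𝕜) : Q ≤ feedbackCost A B Q R K P := by
  rw [feedbackCost, ← add_assoc, le_iff, add_sub_cancel_right]
  exact (hP.conjTranspose_mul_mul_same _).add (hR.conjTranspose_mul_mul_same K)

variable [DecidableEq m]

theorem riccatiMap_eq_feedbackCost_optimalGain (hR : R.PosDef) {P : Matrix n n 𝕜}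
    (hP : P.PosSemidef) :
    riccatiMap A B Q R P = feedbackCost A B Q R (optimalGain A B R P) P :=
  (feedbackCost_optimalGain hR.isHermitian hP.isHermitian
    (posDef_add_conjTranspose_mul_mul hR hP).isUnit).symm

theorem riccatiMap_le_feedbackCost (hR : R.PosDef) {P : Matrix n n 𝕜} (hP : P.PosSemidef)
    (K : Matrix m n 𝕜) : riccatiMap A B Q R P ≤ feedbackCost A B Q R K P := by
  have hG : (R + Bᴴ * P * B).PosDef := posDef_add_conjTranspose_mul_mul hR hP
  rw [feedbackCost_eq_riccatiMap_add hR.isHermitian hP.isHermitian hG.isUnit, le_iff,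
    add_sub_cancel_left]
  exact hG.posSemidef.conjTranspose_mul_mul_same _

theorem le_riccatiMap (hR : R.PosDef) {P : Matrix n n 𝕜} (hP : P.PosSemidef) :
    Q ≤ riccatiMap A B Q R P := by
  rw [riccatiMap_eq_feedbackCost_optimalGain hR hP]
  exact le_feedbackCost hR.posSemidef hP _

theorem monotoneOn_riccatiMap (hR : R.PosDef) : MonotoneOn (riccatiMap A B Q R) (Ici 0) := by
  intro P hP P' hP' hPP'
  rw [mem_Ici, nonneg_iff_posSemidef] at hP hP'
  let K : Matrix m n 𝕜 := optimalGain A B R P'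
  calc riccatiMap A B Q R P ≤ feedbackCost A B Q R K P := riccatiMap_le_feedbackCost hR hP K
    _ ≤ feedbackCost A B Q R K P' := feedbackCost_mono K hPP'
    _ = riccatiMap A B Q R P' := (riccatiMap_eq_feedbackCost_optimalGain hR hP').symm

theorem continuousOn_riccatiMap (hR : R.PosDef) : ContinuousOn (riccatiMap A B Q R) (Ici 0) := by
  intro P hP
  have hdet : (R + Bᴴ * P * B).det ≠ 0 :=
    (posDef_add_conjTranspose_mul_mul hR (nonneg_iff_posSemidef.mp hP)).det_pos.ne'
  have hringInverse : ContinuousAt Ring.inverse (R + Bᴴ * P * B).det := by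
    simpa only [Ring.inverse_eq_inv'] using continuousAt_inv₀ hdet
  have hinv : ContinuousAt (fun X => (R + Bᴴ * X * B)⁻¹) P :=
    (continuousAt_matrix_inv _ hringInverse).comp (f := fun X => R + Bᴴ * X * B) (by fun_prop)
  refine ContinuousAt.continuousWithinAt ?_
  unfold riccatiMap
  fun_prop

theorem exists_isFixedPt_riccatiMap_of_feedbackCost_le (hQ : Q.PosSemidef) (hR : R.PosDef)
    {F : Matrix m n 𝕜} {S : Matrix n n 𝕜} (hS : S.PosSemidef)
    (hFS : feedbackCost A B Q R F S ≤ S) :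
    ∃ P, P.PosSemidef ∧ Function.IsFixedPt (riccatiMap A B Q R) P := by
  obtain ⟨P, hP, hfix⟩ := exists_isFixedPt_mem_Icc_of_monotoneOn
    ((monotoneOn_riccatiMap hR).mono Icc_subset_Ici_self)
    ((continuousOn_riccatiMap hR).mono Icc_subset_Ici_self)
    hS.nonneg
    (hQ.nonneg.trans (le_riccatiMap hR PosSemidef.zero))
    ((riccatiMap_le_feedbackCost hR hS F).trans hFS)
  exact ⟨P, nonneg_iff_posSemidef.mp hP.1, hfix⟩

end RiccatiMap

section SteinEquation

variable {𝕜 n : Type*} [RCLike 𝕜] [Fintype n] [DecidableEq n] {M : Matrix n n 𝕜}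

theorem tendsto_conjTranspose_pow_mul_mul_pow (hM : IsTopologicallyNilpotent M)
    (X : Matrix n n 𝕜) : Tendsto (fun k => (M ^ k)ᴴ * X * M ^ k) atTop (𝓝 0) := by
  have hcont : Continuous fun Y : Matrix n n 𝕜 => Yᴴ * X * Y := by fun_prop
  simpa [Function.comp_def] using (hcont.tendsto 0).comp hM

theorem eq_zero_of_conjTranspose_mul_mul_eq (hM : IsTopologicallyNilpotent M)
    {X : Matrix n n 𝕜} (hX : Mᴴ * X * M = X) : X = 0 := by
  have hpow (k : ℕ) : (M ^ k)ᴴ * X * M ^ k = X := by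
    induction k with
    | zero => simp
    | succ k ih =>
      calc (M ^ (k + 1))ᴴ * X * M ^ (k + 1) = (M ^ k)ᴴ * (Mᴴ * X * M) * M ^ k := by
            simp only [pow_succ', conjTranspose_mul, mul_assoc]
        _ = X := by rw [hX, ih]
  have hlim := tendsto_conjTranspose_pow_mul_mul_pow hM X
  simp only [hpow] at hlim
  exact tendsto_const_nhds_iff.mp hlim

/- In finite dimension the uniqueness of solutions yields existence, without summing the series
`∑ (Mᴴ) ^ k * W * M ^ k`. -/
theorem exists_conjTranspose_mul_mul_add_eq (hM : IsTopologicallyNilpotent M)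
    (W : Matrix n n 𝕜) : ∃ S, Mᴴ * S * M + W = S := by
  let T : Module.End 𝕜 (Matrix n n 𝕜) := 1 - LinearMap.mulLeftRight 𝕜 (Mᴴ, M)
  have hT (X : Matrix n n 𝕜) : T X = X - Mᴴ * X * M := by simp [T]
  have hinj : Function.Injective T := (injective_iff_map_eq_zero T).mpr fun X hX =>
    eq_zero_of_conjTranspose_mul_mul_eq hM (sub_eq_zero.mp (hT X ▸ hX)).symm
  obtain ⟨S, hS⟩ := LinearMap.injective_iff_surjective.mp hinj W
  exact ⟨S, by rw [← hS, hT, add_sub_cancel]⟩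

theorem posSemidef_of_conjTranspose_mul_mul_add_eq (hM : IsTopologicallyNilpotent M)
    {W S : Matrix n n 𝕜} (hW : W.PosSemidef) (hS : Mᴴ * S * M + W = S) : S.PosSemidef := by
  have hanti : Antitone fun k => (M ^ k)ᴴ * S * M ^ k := antitone_nat_of_succ_le fun k => by
    have hstep : (M ^ k)ᴴ * S * M ^ k - (M ^ (k + 1))ᴴ * S * M ^ (k + 1) =
        (M ^ k)ᴴ * W * M ^ k := by
      nth_rewrite 1 [← hS]
      simp only [pow_succ', conjTranspose_mul, mul_add, add_mul, mul_assoc, add_sub_cancel_left]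
    rw [le_iff, hstep]
    exact hW.conjTranspose_mul_mul_same _
  have hle := hanti.le_of_tendsto (tendsto_conjTranspose_pow_mul_mul_pow hM S) 0
  simpa [nonneg_iff_posSemidef] using hle

end SteinEquation

section SpectralStability

theorem eventually_norm_pow_le_pow_of_spectralRadius_lt {𝔸 : Type*} [NormedRing 𝔸]
    [NormedAlgebra ℂ 𝔸] [CompleteSpace 𝔸] {a : 𝔸} {r : NNReal} (hr : spectralRadius ℂ a < r) :
    ∀ᶠ k : ℕ in atTop, ‖a ^ k‖ ≤ r ^ k := by
  have hgelfand := spectrum.pow_nnnorm_pow_one_div_tendsto_nhds_spectralRadius a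
  filter_upwards [hgelfand.eventually_lt_const hr, eventually_gt_atTop 0] with k hroot hk
  have hk' : (0 : ℝ) < k := by exact_mod_cast hk
  rw [one_div, ENNReal.rpow_inv_lt_iff hk', ENNReal.rpow_natCast] at hroot
  exact_mod_cast hroot.le

theorem isTopologicallyNilpotent_of_norm_spectrum_lt_one {𝔸 : Type*} [NormedRing 𝔸]
    [NormedAlgebra ℂ 𝔸] [CompleteSpace 𝔸] {a : 𝔸} (ha : ∀ μ ∈ spectrum ℂ a, ‖μ‖ < 1) :
    IsTopologicallyNilpotent a := by
  rcases subsingleton_or_nontrivial 𝔸 with _ | _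
  · exact Subsingleton.elim 0 a ▸ .zero
  have hradius : spectralRadius ℂ a < (1 : NNReal) :=
    spectrum.spectralRadius_lt_of_forall_lt a fun μ hμ => by exact_mod_cast ha μ hμ
  obtain ⟨r, hr, hr1⟩ := ENNReal.lt_iff_exists_nnreal_btwn.mp hradius
  exact squeeze_zero_norm' (eventually_norm_pow_le_pow_of_spectralRadius_lt hr)
    (tendsto_pow_atTop_nhds_zero_of_lt_one r.2 (by exact_mod_cast hr1))

variable {n : Type*} [Fintype n] [DecidableEq n]

theorem matrix_isTopologicallyNilpotent_of_norm_spectrum_lt_one {M : Matrix n n ℂ}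
    (hM : ∀ μ ∈ spectrum ℂ M, ‖μ‖ < 1) : IsTopologicallyNilpotent M := by
  let _ : NormedRing (Matrix n n ℂ) := Matrix.linftyOpNormedRing
  let _ : NormedAlgebra ℂ (Matrix n n ℂ) := Matrix.linftyOpNormedAlgebra
  have : CompleteSpace (Matrix n n ℂ) := FiniteDimensional.complete ℂ _
  exact isTopologicallyNilpotent_of_norm_spectrum_lt_one hM

theorem isTopologicallyNilpotent_of_norm_spectrum_map_ofReal_lt_one {M : Matrix n n ℝ}
    (hM : ∀ μ ∈ spectrum ℂ (M.map (fun a => (a : ℂ))), ‖μ‖ < 1) :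
    IsTopologicallyNilpotent M := by
  have hre : Continuous fun X : Matrix n n ℂ => X.map Complex.re :=
    continuous_id.matrix_map Complex.continuous_re
  have hpow (k : ℕ) : ((M.map (fun a => (a : ℂ))) ^ k).map Complex.re = M ^ k := by
    have hmap : (M.map (fun a => (a : ℂ))) ^ k = (M ^ k).map (fun a => (a : ℂ)) :=
      (Matrix.map_pow M Complex.ofRealHom k).symm
    ext i j
    simp [hmap]
  have hlim := (hre.tendsto 0).comp
    (matrix_isTopologicallyNilpotent_of_norm_spectrum_lt_one hM)
  simpa [IsTopologicallyNilpotent, Function.comp_def, hpow] using hlim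

end SpectralStability

end RiccatiEquation

open RiccatiEquation

open scoped ComplexOrder MatrixOrder in
theorem dare_solution_exists_of_stabilizable_general {𝕜 n m : Type*} [RCLike 𝕜] [Fintype n]
    [DecidableEq n] [Fintype m] [DecidableEq m] {A : Matrix n n 𝕜} {B : Matrix n m 𝕜}
    {Q : Matrix n n 𝕜} {R : Matrix m m 𝕜} (hQ : Q.PosSemidef) (hR : R.PosDef)
    (hstab : ∃ F : Matrix m n 𝕜, IsTopologicallyNilpotent (A + B * F)) :
    ∃ P : Matrix n n 𝕜, P.PosSemidef ∧ Q ≤ P ∧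
      P = Aᴴ * P * A + Q - Aᴴ * P * B * (R + Bᴴ * P * B)⁻¹ * Bᴴ * P * A := by
  obtain ⟨F, hF⟩ := hstab
  obtain ⟨S, hS⟩ := exists_conjTranspose_mul_mul_add_eq hF (Fᴴ * R * F + Q)
  have hSpos : S.PosSemidef := posSemidef_of_conjTranspose_mul_mul_add_eq hF
    ((hR.posSemidef.conjTranspose_mul_mul_same F).add hQ) hS
  obtain ⟨P, hP, hfix⟩ := exists_isFixedPt_riccatiMap_of_feedbackCost_le hQ hR hSpos hS.le
  exact ⟨P, hP, hfix.eq ▸ le_riccatiMap hR hP, hfix.eq.symm⟩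

/-- If `(A,B)` is asymptotically stabilizable (there exists `F` such that all
complex eigenvalues of `A + B*F` have modulus `< 1`), and `Q`, `R` are symmetric positive
definite, then there exists a symmetric positive definite `P` solving the discrete algebraic
Riccati equation `P = Aᵀ P A + Q − Aᵀ P B (R + Bᵀ P B)⁻¹ Bᵀ P A`. -/
theorem dare_solution_exists_of_stabilizable
    (n m : ℕ) (hn : 0 < n) (hm : 0 < m)
    (A : Matrix (Fin n) (Fin n) ℝ) (B : Matrix (Fin n) (Fin m) ℝ)
    (Q : Matrix (Fin n) (Fin n) ℝ) (R : Matrix (Fin m) (Fin m) ℝ)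
    (hQsymm : Q.IsSymm) (hQ : Q.PosDef) (hRsymm : R.IsSymm) (hR : R.PosDef)
    (hstab : ∃ F : Matrix (Fin m) (Fin n) ℝ,
      ∀ μ ∈ spectrum ℂ ((A + B * F).map (fun a => (a : ℂ))), ‖μ‖ < 1) :
    ∃ P : Matrix (Fin n) (Fin n) ℝ, P.IsSymm ∧ P.PosDef ∧
      P = Aᵀ * P * A + Q - Aᵀ * P * B * (R + Bᵀ * P * B)⁻¹ * Bᵀ * P * A := by
  obtain ⟨P, hP, hQP, hdare⟩ := dare_solution_exists_of_stabilizable_general hQ.posSemidef hR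
    (hstab.imp fun _ => isTopologicallyNilpotent_of_norm_spectrum_map_ofReal_lt_one)
  have hPpos : P.PosDef := add_sub_cancel Q P ▸ hQ.add_posSemidef (le_iff.mp hQP)
  simp only [conjTranspose_eq_transpose_of_trivial] at hdare
  exact ⟨P, isHermitian_iff_isSymm.mp hP.isHermitian, hPpos, hdare⟩
end

section
/- Let A be a real n×n matrix, B a real n×m matrix, Q and R symmetric positive definite, and let P be a symmetric positive definite matrix satisfying the discrete algebraic Riccati equation P = Aᵀ P A + Q − Aᵀ P B (R + Bᵀ P B)⁻¹ Bᵀ P A. Then for every x ∈ ℝⁿ, the function u ↦ ‖x‖_Q² + ‖u‖_R² + ‖Ax + Bu‖_P² attains its minimum over u ∈ ℝᵐ at the unique minimizer u*(x) = −(R + Bᵀ P B)⁻¹ Bᵀ P A x, and the minimum value equals ‖x‖_P². -/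
open Matrix

/-!
The cost is the quadratic form of a block matrix in `(u, x)` whose `u`-block is
`S = R + Bᴴ P B`. Completing the square in `u` writes it as `‖u + K x‖_S²`, with
`K = S⁻¹ Bᴴ P A`, plus the quadratic form in `x` of the Schur complement of `S`. That Schur
complement is the right-hand side of the Riccati equation, and `S` is positive definite.
-/

section RiccatiStep

variable {l m n 𝕜 : Type*} [Fintype l] [Fintype m] [Fintype n]

/-- The cost `‖x‖_Q² + ‖u‖_R² + ‖A x + B u‖_P²` of applying the input `u` in the state `x` and
weighting the resulting state by `P`. Squared weighted norms are encoded as Hermitian forms, so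
that real and complex scalars are treated together. The resulting state may live in a
space `l → 𝕜` other than that of `x`. -/
def oneStepCost [CommRing 𝕜] [StarRing 𝕜] (A : Matrix l n 𝕜) (B : Matrix l m 𝕜)
    (Q : Matrix n n 𝕜) (R : Matrix m m 𝕜) (P : Matrix l l 𝕜) (x : n → 𝕜) (u : m → 𝕜) : 𝕜 :=
  star x ⬝ᵥ Q *ᵥ x + star u ⬝ᵥ R *ᵥ u + star (A *ᵥ x + B *ᵥ u) ⬝ᵥ P *ᵥ (A *ᵥ x + B *ᵥ u)

/-- The gain `K` of the optimal state feedback `u = -K x` for the terminal weight `P`. The inverse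
is `Matrix.inv`, which is `0` on singular matrices. -/
noncomputable def riccatiGain [CommRing 𝕜] [StarRing 𝕜] [DecidableEq m] (A : Matrix l n 𝕜)
    (B : Matrix l m 𝕜) (R : Matrix m m 𝕜) (P : Matrix l l 𝕜) : Matrix m n 𝕜 :=
  (R + Bᴴ * P * B)⁻¹ * Bᴴ * P * A

/-- The Riccati operator, sending a terminal weight `P` to the weight of the optimal one-step cost.
The solutions of the discrete algebraic Riccati equation are its fixed points. -/
noncomputable def riccatiMap [CommRing 𝕜] [StarRing 𝕜] [DecidableEq m] (A : Matrix l n 𝕜)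
    (B : Matrix l m 𝕜) (Q : Matrix n n 𝕜) (R : Matrix m m 𝕜) (P : Matrix l l 𝕜) : Matrix n n 𝕜 :=
  Aᴴ * P * A + Q - Aᴴ * P * B * (R + Bᴴ * P * B)⁻¹ * Bᴴ * P * A

section CompletingTheSquare

variable [CommRing 𝕜] [StarRing 𝕜] (A : Matrix l n 𝕜) (B : Matrix l m 𝕜) (Q : Matrix n n 𝕜)
  (R : Matrix m m 𝕜) (P : Matrix l l 𝕜)

theorem oneStepCost_eq_fromBlocks (x : n → 𝕜) (u : m → 𝕜) :
    oneStepCost A B Q R P x u =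
      star (u ⊕ᵥ x) ⬝ᵥ
        fromBlocks (R + Bᴴ * P * B) (Bᴴ * P * A) (Aᴴ * P * B) (Aᴴ * P * A + Q) *ᵥ (u ⊕ᵥ x) := by
  simp only [oneStepCost, Function.star_sumElim, fromBlocks_mulVec, sumElim_dotProduct_sumElim,
    Sum.elim_comp_inl, Sum.elim_comp_inr, star_add, star_mulVec, add_mulVec, mulVec_add,
    add_vecMul, add_dotProduct, dotProduct_add, dotProduct_mulVec, vecMul_vecMul, Matrix.mul_assoc]
  ring

variable {R P}

theorem oneStepCost_eq_completed_square [DecidableEq m] (hP : P.IsHermitian)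
    (hS : (R + Bᴴ * P * B).IsHermitian) (hS_unit : IsUnit (R + Bᴴ * P * B)) (x : n → 𝕜)
    (u : m → 𝕜) :
    oneStepCost A B Q R P x u =
      star (u + riccatiGain A B R P *ᵥ x) ⬝ᵥ
          (R + Bᴴ * P * B) *ᵥ (u + riccatiGain A B R P *ᵥ x) +
        star x ⬝ᵥ riccatiMap A B Q R P *ᵥ x := by
  have hcross : Aᴴ * P * B = (Bᴴ * P * A)ᴴ := by
    simp only [conjTranspose_mul, conjTranspose_conjTranspose, hP.eq, Matrix.mul_assoc]
  have hgain : riccatiGain A B R P = (R + Bᴴ * P * B)⁻¹ * (Bᴴ * P * A) := by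
    simp only [riccatiGain, Matrix.mul_assoc]
  have hmap : riccatiMap A B Q R P =
      Aᴴ * P * A + Q - (Bᴴ * P * A)ᴴ * (R + Bᴴ * P * B)⁻¹ * (Bᴴ * P * A) := by
    rw [← hcross]
    simp only [riccatiMap, Matrix.mul_assoc]
  let _ := hS_unit.invertible
  rw [oneStepCost_eq_fromBlocks, hcross, hgain, hmap]
  simpa only [dotProduct_mulVec] using
    schur_complement_eq₁₁ (Bᴴ * P * A) (Aᴴ * P * A + Q) u x hS

end CompletingTheSquare

section Minimizer

variable [Field 𝕜] [PartialOrder 𝕜] [StarRing 𝕜] [DecidableEq m] (A : Matrix l n 𝕜)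
  {B : Matrix l m 𝕜} (Q : Matrix n n 𝕜) {R : Matrix m m 𝕜} {P : Matrix l l 𝕜}

theorem oneStepCost_neg_riccatiGain (hP : P.IsHermitian) (hS : (R + Bᴴ * P * B).PosDef)
    (x : n → 𝕜) :
    oneStepCost A B Q R P x (-(riccatiGain A B R P *ᵥ x)) =
      star x ⬝ᵥ riccatiMap A B Q R P *ᵥ x := by
  rw [oneStepCost_eq_completed_square A B Q hP hS.isHermitian hS.isUnit, neg_add_cancel,
    mulVec_zero, dotProduct_zero, zero_add]

theorem oneStepCost_neg_riccatiGain_lt [IsOrderedAddMonoid 𝕜] (hP : P.IsHermitian)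
    (hS : (R + Bᴴ * P * B).PosDef) (x : n → 𝕜) {u : m → 𝕜}
    (hu : u ≠ -(riccatiGain A B R P *ᵥ x)) :
    oneStepCost A B Q R P x (-(riccatiGain A B R P *ᵥ x)) < oneStepCost A B Q R P x u := by
  have hdev : u + riccatiGain A B R P *ᵥ x ≠ 0 := mt eq_neg_of_add_eq_zero_left hu
  rw [oneStepCost_neg_riccatiGain A Q hP hS,
    oneStepCost_eq_completed_square A B Q hP hS.isHermitian hS.isUnit x u]
  exact lt_add_of_pos_left _ (hS.dotProduct_mulVec_pos hdev)

theorem dare_one_step_minimizer_general [IsOrderedAddMonoid 𝕜] (hP : P.IsHermitian)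
    (hS : (R + Bᴴ * P * B).PosDef) (x : n → 𝕜) :
    let f := oneStepCost A B Q R P x
    let ustar := -(riccatiGain A B R P *ᵥ x)
    (∀ u, f ustar ≤ f u) ∧ (∀ u, u ≠ ustar → f ustar < f u) ∧
      f ustar = star x ⬝ᵥ riccatiMap A B Q R P *ᵥ x := by
  intro f ustar
  have hlt (u : m → 𝕜) (hu : u ≠ ustar) : f ustar < f u :=
    oneStepCost_neg_riccatiGain_lt A Q hP hS x hu
  refine ⟨fun u => ?_, hlt, oneStepCost_neg_riccatiGain A Q hP hS x⟩
  obtain rfl | hu := eq_or_ne u ustar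
  · exact le_rfl
  · exact (hlt u hu).le

end Minimizer

end RiccatiStep

/-- If `P` is a symmetric positive definite solution of the discrete algebraic
Riccati equation, then for every `x` the function
`u ↦ ‖x‖_Q² + ‖u‖_R² + ‖Ax + Bu‖_P²` attains its minimum at the unique minimizer
`u*(x) = −(R + Bᵀ P B)⁻¹ Bᵀ P A x`, with minimal value `‖x‖_P²`. -/
theorem dare_one_step_minimizer
    (n m : ℕ)
    (A : Matrix (Fin n) (Fin n) ℝ) (B : Matrix (Fin n) (Fin m) ℝ)
    (Q : Matrix (Fin n) (Fin n) ℝ) (R : Matrix (Fin m) (Fin m) ℝ)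
    (P : Matrix (Fin n) (Fin n) ℝ)
    (hQsymm : Q.IsSymm) (hQ : Q.PosDef) (hRsymm : R.IsSymm) (hR : R.PosDef)
    (hPsymm : P.IsSymm) (hP : P.PosDef)
    (hriccati : P = Aᵀ * P * A + Q - Aᵀ * P * B * (R + Bᵀ * P * B)⁻¹ * Bᵀ * P * A)
    (x : Fin n → ℝ) :
    let f : (Fin m → ℝ) → ℝ := fun u =>
      x ⬝ᵥ Q.mulVec x + u ⬝ᵥ R.mulVec u +
        (A.mulVec x + B.mulVec u) ⬝ᵥ P.mulVec (A.mulVec x + B.mulVec u)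
    let ustar : Fin m → ℝ := -(((R + Bᵀ * P * B)⁻¹ * Bᵀ * P * A).mulVec x)
    (∀ u : Fin m → ℝ, f ustar ≤ f u) ∧
    (∀ u : Fin m → ℝ, u ≠ ustar → f ustar < f u) ∧
    f ustar = x ⬝ᵥ P.mulVec x := by
  have hS : (R + Bᴴ * P * B).PosDef :=
    hR.add_posSemidef (hP.posSemidef.conjTranspose_mul_mul_same B)
  have hfixed : riccatiMap A B Q R P = P := by
    simpa only [riccatiMap, conjTranspose_eq_transpose_of_trivial] using hriccati.symm
  simpa only [hfixed, oneStepCost, riccatiGain, conjTranspose_eq_transpose_of_trivial, star_trivial]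
    using dare_one_step_minimizer_general A Q hP.isHermitian hS x
end

section
/- Let A, B, Q, R, P be as in the discrete algebraic Riccati setting (Q, R, P symmetric positive definite and P solving the Riccati equation). Define the LQR feedback u*(x) = −(R + Bᵀ P B)⁻¹ Bᵀ P A x and the closed-loop successor state x⁺ = A x + B u*(x). Then for every x ∈ ℝⁿ the exact Lyapunov descent identity ‖x⁺‖_P² = ‖x‖_P² − ‖x‖_Q² − ‖u*(x)‖_R² holds; in particular ‖x⁺‖_P² ≤ ‖x‖_P² − ‖x‖_Q². -/
open Matrix

/-! The gain `K = (R + Bᵀ P B)⁻¹ Bᵀ P A` solves `(R + Bᵀ P B) K = Bᵀ P A`. Multiplying this on the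
left by `Kᵀ` shows that in the expansion
`(A - B K)ᵀ P (A - B K) = (Aᵀ P A - Aᵀ P B K) - (Kᵀ Bᵀ P A - Kᵀ Bᵀ P B K)`
the second bracket is `Kᵀ R K`, while the Riccati equation identifies the first as `P - Q`.
Evaluating both sides as quadratic forms at `x` gives the descent identity. -/

lemma dotProduct_transpose_mul_mul_mulVec {ι κ S : Type*} [Fintype ι] [Fintype κ] [CommSemiring S]
    (M : Matrix ι κ S) (P : Matrix ι ι S) (x : κ → S) :
    x ⬝ᵥ (Mᵀ * P * M) *ᵥ x = (M *ᵥ x) ⬝ᵥ P *ᵥ (M *ᵥ x) := by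
  rw [← mulVec_mulVec, ← mulVec_mulVec, dotProduct_transpose_mulVec, dotProduct_comm]

lemma isUnit_det_add_transpose_mul_mul {ι κ 𝕜 : Type*} [Fintype ι] [Fintype κ] [DecidableEq κ]
    [Field 𝕜] [PartialOrder 𝕜] [AddLeftMono 𝕜] [StarRing 𝕜] [TrivialStar 𝕜]
    {R : Matrix κ κ 𝕜} {P : Matrix ι ι 𝕜} (hR : R.PosDef) (hP : P.PosSemidef) (B : Matrix ι κ 𝕜) :
    IsUnit (R + Bᵀ * P * B).det := by
  rw [← conjTranspose_eq_transpose_of_trivial, ← isUnit_iff_isUnit_det]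
  exact (hR.add_posSemidef (hP.conjTranspose_mul_mul_same B)).isUnit

section ClosedLoop

variable {ι κ S : Type*} [Fintype ι] [Fintype κ] [CommRing S]
  {A P Q : Matrix ι ι S} {B : Matrix ι κ S} {R : Matrix κ κ S}

lemma closedLoop_lyapunov_eq {K : Matrix κ ι S} (hK : (R + Bᵀ * P * B) * K = Bᵀ * P * A)
    (hriccati : P = Aᵀ * P * A + Q - Aᵀ * P * B * K) :
    (A - B * K)ᵀ * P * (A - B * K) = P - Q - Kᵀ * R * K := by
  have hstate : Aᵀ * P * A - Aᵀ * P * B * K = P - Q := by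
    rw [eq_sub_iff_add_eq, sub_add_eq_add_sub, ← hriccati]
  have hinput : Kᵀ * (Bᵀ * P * A) - Kᵀ * (Bᵀ * P * B) * K = Kᵀ * R * K := by
    rw [← hK, ← Matrix.mul_assoc, Matrix.mul_add, Matrix.add_mul, add_sub_cancel_right]
  calc (A - B * K)ᵀ * P * (A - B * K)
      = (Aᵀ * P * A - Aᵀ * P * B * K) - (Kᵀ * (Bᵀ * P * A) - Kᵀ * (Bᵀ * P * B) * K) := by
        simp only [transpose_sub, transpose_mul, Matrix.sub_mul, Matrix.mul_sub, Matrix.mul_assoc]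
        abel
    _ = P - Q - Kᵀ * R * K := by rw [hstate, hinput]

lemma closedLoop_quadraticForm_eq {K : Matrix κ ι S} (hK : (R + Bᵀ * P * B) * K = Bᵀ * P * A)
    (hriccati : P = Aᵀ * P * A + Q - Aᵀ * P * B * K) (x : ι → S) :
    ((A - B * K) *ᵥ x) ⬝ᵥ P *ᵥ ((A - B * K) *ᵥ x)
      = x ⬝ᵥ P *ᵥ x - x ⬝ᵥ Q *ᵥ x - (K *ᵥ x) ⬝ᵥ R *ᵥ (K *ᵥ x) := by
  rw [← dotProduct_transpose_mul_mul_mulVec, closedLoop_lyapunov_eq hK hriccati, sub_mulVec,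
    sub_mulVec, dotProduct_sub, dotProduct_sub, dotProduct_transpose_mul_mul_mulVec]

variable [DecidableEq κ]

/-- The gain `K` of the LQR feedback law `u = -K x` for the dynamics `x⁺ = A x + B u`, with input
cost `R` and cost-to-go `P`. It is meaningful only when `R + Bᵀ P B` is invertible, since the matrix
inverse is `0` otherwise. -/
noncomputable def lqrGain (A : Matrix ι ι S) (B : Matrix ι κ S) (R : Matrix κ κ S)
    (P : Matrix ι ι S) : Matrix κ ι S :=
  (R + Bᵀ * P * B)⁻¹ * Bᵀ * P * A

lemma mul_lqrGain (hdet : IsUnit (R + Bᵀ * P * B).det) :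
    (R + Bᵀ * P * B) * lqrGain A B R P = Bᵀ * P * A := by
  simp only [lqrGain, Matrix.mul_assoc _⁻¹, mul_nonsing_inv_cancel_left _ _ hdet]

theorem dare_lyapunov_descent_general [PartialOrder S] [AddLeftMono S]
    (hdet : IsUnit (R + Bᵀ * P * B).det) (hR : ∀ u : κ → S, 0 ≤ u ⬝ᵥ R *ᵥ u)
    (hriccati : P = Aᵀ * P * A + Q - Aᵀ * P * B * (R + Bᵀ * P * B)⁻¹ * Bᵀ * P * A) (x : ι → S) :
    let ustar : κ → S := -(lqrGain A B R P *ᵥ x)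
    let xplus : ι → S := A *ᵥ x + B *ᵥ ustar
    xplus ⬝ᵥ P *ᵥ xplus = x ⬝ᵥ P *ᵥ x - x ⬝ᵥ Q *ᵥ x - ustar ⬝ᵥ R *ᵥ ustar ∧
    xplus ⬝ᵥ P *ᵥ xplus ≤ x ⬝ᵥ P *ᵥ x - x ⬝ᵥ Q *ᵥ x := by
  intro ustar xplus
  have hriccati_gain : P = Aᵀ * P * A + Q - Aᵀ * P * B * lqrGain A B R P := by
    simpa only [lqrGain, Matrix.mul_assoc] using hriccati
  have hxplus : xplus = (A - B * lqrGain A B R P) *ᵥ x := by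
    simp only [xplus, ustar, mulVec_neg, mulVec_mulVec, sub_eq_add_neg, add_mulVec, neg_mulVec]
  have hdescent : xplus ⬝ᵥ P *ᵥ xplus
      = x ⬝ᵥ P *ᵥ x - x ⬝ᵥ Q *ᵥ x - ustar ⬝ᵥ R *ᵥ ustar := by
    rw [hxplus, closedLoop_quadraticForm_eq (mul_lqrGain hdet) hriccati_gain, mulVec_neg,
      neg_dotProduct_neg]
  exact ⟨hdescent, hdescent.trans_le (sub_le_self _ (hR ustar))⟩

end ClosedLoop

/-- Under the discrete algebraic Riccati setting, with the LQR feedback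
`u*(x) = −(R + Bᵀ P B)⁻¹ Bᵀ P A x` and closed-loop successor `x⁺ = A x + B u*(x)`, one has the
exact Lyapunov descent identity `‖x⁺‖_P² = ‖x‖_P² − ‖x‖_Q² − ‖u*(x)‖_R²`, and in particular
`‖x⁺‖_P² ≤ ‖x‖_P² − ‖x‖_Q²`. -/
theorem dare_lyapunov_descent
    (n m : ℕ)
    (A : Matrix (Fin n) (Fin n) ℝ) (B : Matrix (Fin n) (Fin m) ℝ)
    (Q : Matrix (Fin n) (Fin n) ℝ) (R : Matrix (Fin m) (Fin m) ℝ)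
    (P : Matrix (Fin n) (Fin n) ℝ)
    (hQsymm : Q.IsSymm) (hQ : Q.PosDef) (hRsymm : R.IsSymm) (hR : R.PosDef)
    (hPsymm : P.IsSymm) (hP : P.PosDef)
    (hriccati : P = Aᵀ * P * A + Q - Aᵀ * P * B * (R + Bᵀ * P * B)⁻¹ * Bᵀ * P * A)
    (x : Fin n → ℝ) :
    let ustar : Fin m → ℝ := -(((R + Bᵀ * P * B)⁻¹ * Bᵀ * P * A).mulVec x)
    let xplus : Fin n → ℝ := A.mulVec x + B.mulVec ustar
    xplus ⬝ᵥ P.mulVec xplus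
      = x ⬝ᵥ P.mulVec x - x ⬝ᵥ Q.mulVec x - ustar ⬝ᵥ R.mulVec ustar ∧
    xplus ⬝ᵥ P.mulVec xplus ≤ x ⬝ᵥ P.mulVec x - x ⬝ᵥ Q.mulVec x :=
  dare_lyapunov_descent_general (isUnit_det_add_transpose_mul_mul hR hP.posSemidef B)
    hR.posSemidef.dotProduct_mulVec_nonneg hriccati x
end
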